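/- Let n ≥ 1 and 0 < α, s < 1. If φ is a (real- or complex-valued) Schwartz function on ℝⁿ×ℝ, then the function (x,t) ↦ D_right^α φ(x,t) + (-Δ)^s φ(x,t) is infinitely differentiable on ℝⁿ×ℝ. -/

import Mathlib

open MeasureTheory Set

/-- The normalization constant `C_α = 1/|Γ(-α)|` for the Marchaud fractional derivative. -/
noncomputable def Calpha (α : ℝ) : ℝ := 1 / |Real.Gamma (-α)|

/-- The normalization constant `C_{n,s} = 4^s Γ(n/2+s)/(π^{n/2}|Γ(-s)|)` for the
fractional Laplacian. -/
noncomputable def Cns (n : ℕ) (s : ℝ) : ℝ :=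
  (4 : ℝ) ^ s * Real.Gamma ((n : ℝ) / 2 + s) / (Real.pi ^ ((n : ℝ) / 2) * |Real.Gamma (-s)|)

/-- The right Marchaud fractional derivative of order `α` in the time variable, for a
complex-valued function: `D_right^α φ(x,t) = C_α ∫_t^∞ (φ(x,t) - φ(x,τ))/(τ-t)^{1+α} dτ`. -/
noncomputable def marchaudRightC {n : ℕ} (α : ℝ) (φ : EuclideanSpace ℝ (Fin n) × ℝ → ℂ)
    (x : EuclideanSpace ℝ (Fin n)) (t : ℝ) : ℂ :=
  (Calpha α : ℂ) * ∫ τ in Ioi t, (φ (x, t) - φ (x, τ)) / (((τ - t) ^ (1 + α) : ℝ) : ℂ)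

/-- The left Marchaud fractional derivative of order `α` in the time variable, for a
complex-valued function: `D_left^α φ(x,t) = C_α ∫_{-∞}^t (φ(x,t) - φ(x,τ))/(t-τ)^{1+α} dτ`. -/
noncomputable def marchaudLeftC {n : ℕ} (α : ℝ) (φ : EuclideanSpace ℝ (Fin n) × ℝ → ℂ)
    (x : EuclideanSpace ℝ (Fin n)) (t : ℝ) : ℂ :=
  (Calpha α : ℂ) * ∫ τ in Iio t, (φ (x, t) - φ (x, τ)) / (((t - τ) ^ (1 + α) : ℝ) : ℂ)

/-- The fractional Laplacian `(-Δ)^s` acting in the space variable, for a complex-valued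
function: `(-Δ)^s φ(x,t) = (C_{n,s}/2) ∫_{ℝⁿ} (2φ(x,t) - φ(x+y,t) - φ(x-y,t))/|y|^{n+2s} dy`. -/
noncomputable def fracLapC {n : ℕ} (s : ℝ) (φ : EuclideanSpace ℝ (Fin n) × ℝ → ℂ)
    (x : EuclideanSpace ℝ (Fin n)) (t : ℝ) : ℂ :=
  ((Cns n s / 2 : ℝ) : ℂ) * ∫ y : EuclideanSpace ℝ (Fin n),
    (2 * φ (x, t) - φ (x + y, t) - φ (x - y, t)) / ((‖y‖ ^ ((n : ℝ) + 2 * s) : ℝ) : ℂ)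

/-!
With `τ = t + h` in the Marchaud derivative, both operators integrate a finite difference
`Δ_[v]^[m] φ` against the kernel `‖v‖ ^ (-(d + b))` over a `d`-dimensional space: `m = 1`, `b = α`
for the Marchaud derivative and `m = 2`, `b = 2 * s` for the fractional Laplacian. Derivatives
commute with `Δ_[v]`, so each derivative of the integrand is again a finite difference of a bounded
function with bounded derivatives, hence `O(min 1 (‖v‖ ^ m))` uniformly in the base point. Since
`0 < b < m`, this bound is integrable against the kernel both near `0` and near infinity, which
allows differentiating under the integral sign.
-/

open scoped ContDiff fwdDiff

section DominatedDifferentiation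

variable {E G Y : Type*} [NormedAddCommGroup E] [NormedSpace ℝ E]
  [NormedAddCommGroup G] [NormedSpace ℝ G] [MeasurableSpace Y] {μ : Measure Y}

theorem integral_curryLeft {k : ℕ} (f : Y → E [×k + 1]→L[ℝ] G) :
    ∫ y, (f y).curryLeft ∂μ = (∫ y, f y ∂μ).curryLeft :=
  ContinuousLinearEquiv.integral_comp_comm (𝕜 := ℝ) (E := E [×k + 1]→L[ℝ] G)
    (F := E →L[ℝ] E [×k]→L[ℝ] G)
    (continuousMultilinearCurryLeftEquiv ℝ (fun _ => E) G).toContinuousLinearEquiv f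

theorem contDiff_integral_of_dominated {N : ℕ∞} {F : E → Y → G}
    (hF : ∀ᵐ y ∂μ, ContDiff ℝ N (F · y))
    (hF_meas : ∀ k : ℕ, k ≤ N → ∀ x,
      AEStronglyMeasurable (fun y => iteratedFDeriv ℝ k (F · y) x) μ)
    (hF_bound : ∀ k : ℕ, k ≤ N → ∃ g : Y → ℝ, Integrable g μ ∧
      ∀ᵐ y ∂μ, ∀ x, ‖iteratedFDeriv ℝ k (F · y) x‖ ≤ g y) :
    ContDiff ℝ N fun x => ∫ y, F x y ∂μ := by
  refine HasFTaylorSeriesUpTo.contDiff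
    (f' := fun x k => ∫ y, iteratedFDeriv ℝ k (F · y) x ∂μ) ⟨fun x => ?_, fun k hk x => ?_,
      fun k hk => ?_⟩
  · exact ((continuousMultilinearCurryFin0 ℝ E G).toContinuousLinearEquiv.integral_comp_comm
      fun y => iteratedFDeriv ℝ 0 (F · y) x).symm
  · have hk' : (k : ℕ∞) < N := mod_cast hk
    have hk1 : ((k + 1 : ℕ) : ℕ∞) ≤ N := mod_cast Order.add_one_le_of_lt hk'
    obtain ⟨g₀, hg₀, hFg₀⟩ := hF_bound k hk'.le
    obtain ⟨g₁, hg₁, hFg₁⟩ := hF_bound (k + 1) hk1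
    rw [← integral_curryLeft]
    refine hasFDerivAt_integral_of_dominated_of_fderiv_le Filter.univ_mem
      (.of_forall (hF_meas k hk'.le)) (hg₀.mono' (hF_meas k hk'.le x) (hFg₀.mono fun y hy => hy x))
      ((continuousMultilinearCurryLeftEquiv ℝ (fun _ => E) G).continuous.comp_aestronglyMeasurable
        (hF_meas (k + 1) hk1 x))
      (hFg₁.mono fun y hy z _ => (ContinuousMultilinearMap.curryLeft_norm _).trans_le (hy z)) hg₁
      (hF.mono fun y hy z _ => ?_)
    exact (contDiff_iff_ftaylorSeries.1 hy).fderiv k hk z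
  · have hk' : (k : ℕ∞) ≤ N := mod_cast hk
    obtain ⟨g, hg, hFg⟩ := hF_bound k hk'
    exact continuous_of_dominated (hF_meas k hk') (fun x => hFg.mono fun y hy => hy x) hg
      (hF.mono fun y hy => hy.continuous_iteratedFDeriv hk)

end DominatedDifferentiation

section FiniteDifferences

theorem continuous_fwdDiff_iter {M G : Type*} [AddCommMonoid M] [TopologicalSpace M]
    [ContinuousAdd M] [AddCommGroup G] [TopologicalSpace G] [ContinuousSub G] {f : M → G}
    (hf : Continuous f) (m : ℕ) : Continuous fun p : M × M => (Δ_[p.1])^[m] f p.2 := by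
  induction m with
  | zero => exact hf.comp continuous_snd
  | succ m ih =>
    simp only [Function.iterate_succ_apply', fwdDiff]
    exact (ih.comp (continuous_fst.prodMk (continuous_snd.add continuous_fst))).sub ih

theorem norm_fwdDiff_iter_le_two_pow_mul {M G : Type*} [AddCommMonoid M]
    [SeminormedAddCommGroup G] {f : M → G} {C : ℝ} (hC : ∀ x, ‖f x‖ ≤ C) (m : ℕ) (v x : M) :
    ‖(Δ_[v])^[m] f x‖ ≤ 2 ^ m * C := by
  induction m generalizing x with
  | zero => simpa using hC x
  | succ m ih =>
    rw [Function.iterate_succ_apply', fwdDiff]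
    calc ‖(Δ_[v])^[m] f (x + v) - (Δ_[v])^[m] f x‖
        ≤ ‖(Δ_[v])^[m] f (x + v)‖ + ‖(Δ_[v])^[m] f x‖ := norm_sub_le _ _
      _ ≤ 2 ^ m * C + 2 ^ m * C := add_le_add (ih _) (ih _)
      _ = 2 ^ (m + 1) * C := by ring

section Smoothness

variable {𝕜 E F : Type*} [NontriviallyNormedField 𝕜] [NormedAddCommGroup E] [NormedSpace 𝕜 E]
  [NormedAddCommGroup F] [NormedSpace 𝕜 F]

theorem contDiff_fwdDiff {N : WithTop ℕ∞} {f : E → F} (hf : ContDiff 𝕜 N f) (v : E) :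
    ContDiff 𝕜 N (Δ_[v] f) :=
  (hf.comp (contDiff_id.add contDiff_const)).sub hf

theorem contDiff_fwdDiff_iter {N : WithTop ℕ∞} {f : E → F} (hf : ContDiff 𝕜 N f) (m : ℕ) (v : E) :
    ContDiff 𝕜 N ((Δ_[v])^[m] f) :=
  Function.Iterate.rec (ContDiff 𝕜 N) hf (fun _ hg => contDiff_fwdDiff hg v) m

theorem iteratedFDeriv_fwdDiff {k : ℕ} {f : E → F} (hf : ContDiff 𝕜 k f) (v : E) :
    iteratedFDeriv 𝕜 k (Δ_[v] f) = Δ_[v] (iteratedFDeriv 𝕜 k f) := by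
  have hshift : ContDiff 𝕜 k fun x => f (x + v) := hf.comp (contDiff_id.add contDiff_const)
  ext1 x
  rw [fwdDiff, ← iteratedFDeriv_comp_add_right]
  exact iteratedFDeriv_sub_apply hshift.contDiffAt hf.contDiffAt

theorem iteratedFDeriv_fwdDiff_iter {k : ℕ} {f : E → F} (hf : ContDiff 𝕜 k f) (m : ℕ) (v : E) :
    iteratedFDeriv 𝕜 k ((Δ_[v])^[m] f) = (Δ_[v])^[m] (iteratedFDeriv 𝕜 k f) := by
  induction m with
  | zero => rfl
  | succ m ih =>
    rw [Function.iterate_succ_apply', Function.iterate_succ_apply',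
      iteratedFDeriv_fwdDiff (contDiff_fwdDiff_iter hf m v), ih]

end Smoothness

variable {E F : Type*} [NormedAddCommGroup E] [NormedSpace ℝ E]
  [NormedAddCommGroup F] [NormedSpace ℝ F]

theorem norm_fwdDiff_iteratedFDeriv_le {k : ℕ} {f : E → F} (hf : ContDiff ℝ (k + 1) f) {C : ℝ}
    (hC : ∀ x, ‖iteratedFDeriv ℝ (k + 1) f x‖ ≤ C) (v x : E) :
    ‖Δ_[v] (iteratedFDeriv ℝ k f) x‖ ≤ C * ‖v‖ := by
  have hdiff : Differentiable ℝ (iteratedFDeriv ℝ k f) :=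
    hf.differentiable_iteratedFDeriv (mod_cast Nat.lt_succ_self k)
  simpa [fwdDiff] using convex_univ.norm_image_sub_le_of_norm_fderiv_le (fun y _ => hdiff y)
    (fun y _ => norm_fderiv_iteratedFDeriv.trans_le (hC y)) (mem_univ x) (mem_univ (x + v))

theorem norm_fwdDiff_iter_iteratedFDeriv_le {k m : ℕ} {f : E → F} (hf : ContDiff ℝ (k + m) f)
    {C : ℝ} (hC : ∀ x, ‖iteratedFDeriv ℝ (k + m) f x‖ ≤ C) (v x : E) :
    ‖(Δ_[v])^[m] (iteratedFDeriv ℝ k f) x‖ ≤ C * ‖v‖ ^ m := by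
  induction m generalizing f C with
  | zero => simpa using hC x
  | succ m ih =>
    have hf' : ContDiff ℝ (k + m) f := hf.of_le (by gcongr; simp)
    have hΔ : ∀ y, ‖iteratedFDeriv ℝ (k + m) (Δ_[v] f) y‖ ≤ C * ‖v‖ := fun y => by
      rw [iteratedFDeriv_fwdDiff (mod_cast hf')]
      exact norm_fwdDiff_iteratedFDeriv_le (mod_cast hf) hC v y
    rw [Function.iterate_succ_apply, ← iteratedFDeriv_fwdDiff (hf'.of_le (by simp))]
    exact (ih (contDiff_fwdDiff hf' v) hΔ).trans_eq (by ring)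

end FiniteDifferences

section BoundedContDiff

variable {E F Y : Type*} [NormedAddCommGroup E] [NormedSpace ℝ E]
  [NormedAddCommGroup F] [NormedSpace ℝ F] [MeasurableSpace Y] {μ : Measure Y}

/-- The space `C_b^N` of `N` times continuously differentiable functions whose derivatives up to
order `N`, the function itself included, are bounded; for `N = ⊤`, each derivative has a bound of
its own. These are the functions whose singular integrals of finite differences can be
differentiated. -/
structure BoundedContDiff (N : ℕ∞) (f : E → F) : Prop where
  contDiff : ContDiff ℝ N f
  exists_norm_iteratedFDeriv_le : ∀ k : ℕ, k ≤ N → ∃ C, ∀ x, ‖iteratedFDeriv ℝ k f x‖ ≤ C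

namespace BoundedContDiff

theorem mono {M N : ℕ∞} {f : E → F} (hf : BoundedContDiff N f) (hMN : M ≤ N) :
    BoundedContDiff M f where
  contDiff := hf.contDiff.of_le (mod_cast hMN)
  exists_norm_iteratedFDeriv_le k hk := hf.exists_norm_iteratedFDeriv_le k (hk.trans hMN)

theorem of_schwartzMap (φ : SchwartzMap E F) (N : ℕ∞) : BoundedContDiff N φ where
  contDiff := φ.smooth N
  exists_norm_iteratedFDeriv_le k _ := by
    obtain ⟨C, -, hC⟩ := φ.decay 0 k
    exact ⟨C, fun x => by simpa using hC x⟩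

theorem exists_norm_fwdDiff_iter_iteratedFDeriv_le {k m : ℕ} {f : E → F}
    (hf : BoundedContDiff (k + m) f) :
    ∃ C, ∀ v x, ‖(Δ_[v])^[m] (iteratedFDeriv ℝ k f) x‖ ≤ C * min 1 (‖v‖ ^ m) := by
  obtain ⟨A, hA⟩ := hf.exists_norm_iteratedFDeriv_le k (by simp)
  obtain ⟨B, hB⟩ := hf.exists_norm_iteratedFDeriv_le (k + m) (by simp)
  have hB0 : 0 ≤ B := (norm_nonneg _).trans (hB 0)
  refine ⟨max (2 ^ m * A) B, fun v x => ?_⟩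
  rw [mul_min_of_nonneg _ _ (hB0.trans (le_max_right _ _)), mul_one]
  refine le_min ?_ ?_
  · exact (norm_fwdDiff_iter_le_two_pow_mul hA m v x).trans (le_max_left _ _)
  · exact (norm_fwdDiff_iter_iteratedFDeriv_le hf.contDiff hB v x).trans
      (by gcongr; exact le_max_right _ _)

theorem contDiff_integral_smul_fwdDiff_iter {N : ℕ∞} {m : ℕ} {f : E → F}
    (hf : BoundedContDiff (N + m) f) {w : Y → ℝ} {u v : Y → E} (hw : AEStronglyMeasurable w μ)
    (hu : AEStronglyMeasurable u μ) (hv : AEStronglyMeasurable v μ)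
    (hint : Integrable (fun y => w y * min 1 (‖v y‖ ^ m)) μ) :
    ContDiff ℝ N fun x => ∫ y, w y • (Δ_[v y])^[m] f (x + u y) ∂μ := by
  have hfN : ContDiff ℝ N f := hf.contDiff.of_le (by simp)
  have hshift : ∀ y, ContDiff ℝ N fun x => (Δ_[v y])^[m] f (x + u y) := fun y =>
    (contDiff_fwdDiff_iter hfN m (v y)).comp (contDiff_id.add contDiff_const)
  have hderiv : ∀ k : ℕ, k ≤ N → ∀ y x,
      iteratedFDeriv ℝ k (fun x => w y • (Δ_[v y])^[m] f (x + u y)) x =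
        w y • (Δ_[v y])^[m] (iteratedFDeriv ℝ k f) (x + u y) := fun k hk y x => by
    have hkN : (k : WithTop ℕ∞) ≤ N := mod_cast hk
    rw [iteratedFDeriv_const_smul_apply' ((hshift y).of_le hkN).contDiffAt,
      iteratedFDeriv_comp_add_right, iteratedFDeriv_fwdDiff_iter (hfN.of_le hkN)]
  refine contDiff_integral_of_dominated (.of_forall fun y => contDiff_const.smul (hshift y))
    (fun k hk x => ?_) (fun k hk => ?_)
  · simp only [hderiv k hk]
    have hcont := continuous_fwdDiff_iter (hfN.continuous_iteratedFDeriv (mod_cast hk)) m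
    exact hw.smul (hcont.comp_aestronglyMeasurable (hv.prodMk (hu.const_add x)))
  · obtain ⟨C, hC⟩ := (hf.mono (M := k + m) (by gcongr)).exists_norm_fwdDiff_iter_iteratedFDeriv_le
    refine ⟨fun y => C * ‖w y * min 1 (‖v y‖ ^ m)‖, hint.norm.const_mul C,
      .of_forall fun y x => ?_⟩
    have hmin : 0 ≤ min 1 (‖v y‖ ^ m) := by positivity
    calc ‖iteratedFDeriv ℝ k (fun x => w y • (Δ_[v y])^[m] f (x + u y)) x‖
        = ‖w y‖ * ‖(Δ_[v y])^[m] (iteratedFDeriv ℝ k f) (x + u y)‖ := by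
          rw [hderiv k hk, norm_smul]
      _ ≤ ‖w y‖ * (C * min 1 (‖v y‖ ^ m)) := by gcongr; exact hC _ _
      _ = C * ‖w y * min 1 (‖v y‖ ^ m)‖ := by
          rw [norm_mul, Real.norm_of_nonneg hmin]; ring

end BoundedContDiff

end BoundedContDiff

theorem integrableOn_Ioi_inv_rpow_mul_min_one_rpow {a b : ℝ} (hb : 0 < b) (hba : b < a) :
    IntegrableOn (fun r : ℝ => (r ^ (1 + b))⁻¹ * min 1 (r ^ a)) (Ioi 0) := by
  rw [← Ioc_union_Ioi_eq_Ioi zero_le_one]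
  refine IntegrableOn.union ?_ ?_
  · have h : IntegrableOn (fun r : ℝ => r ^ (a - (1 + b))) (Ioc 0 1) := by
      rw [← intervalIntegrable_iff_integrableOn_Ioc_of_le zero_le_one]
      exact intervalIntegral.intervalIntegrable_rpow' (by linarith)
    refine h.congr_fun (fun r hr => ?_) measurableSet_Ioc
    dsimp only
    rw [min_eq_right (Real.rpow_le_one hr.1.le hr.2 (by linarith)), Real.rpow_sub hr.1,
      div_eq_inv_mul]
  · have h : IntegrableOn (fun r : ℝ => r ^ (-(1 + b))) (Ioi 1) :=
      integrableOn_Ioi_rpow_of_lt (by linarith) one_pos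
    refine h.congr_fun (fun r hr => ?_) measurableSet_Ioi
    have hr : 1 < r := hr
    dsimp only
    rw [min_eq_left (Real.one_le_rpow hr.le (by linarith)), Real.rpow_neg (by linarith), mul_one]

theorem integrable_inv_norm_rpow_mul_min_one_rpow {E : Type*} [NormedAddCommGroup E]
    [NormedSpace ℝ E] [FiniteDimensional ℝ E] [Nontrivial E] [MeasurableSpace E] [BorelSpace E]
    (μ : Measure E) [μ.IsAddHaarMeasure] {a b : ℝ} (hb : 0 < b) (hba : b < a) :
    Integrable (fun y : E =>
      (‖y‖ ^ (Module.finrank ℝ E + b))⁻¹ * min 1 (‖y‖ ^ a)) μ := by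
  rw [integrable_fun_norm_addHaar μ
    (f := fun r : ℝ => (r ^ (Module.finrank ℝ E + b))⁻¹ * min 1 (r ^ a))]
  refine (integrableOn_Ioi_inv_rpow_mul_min_one_rpow hb hba).congr_fun (fun r hr => ?_)
    measurableSet_Ioi
  have hr : 0 < r := hr
  have hd : 1 ≤ Module.finrank ℝ E := Module.finrank_pos
  have hsplit : r ^ (Module.finrank ℝ E + b) = r ^ (Module.finrank ℝ E - 1) * r ^ (1 + b) := by
    rw [← Real.rpow_natCast, ← Real.rpow_add hr, Nat.cast_sub hd]
    congr 1
    push_cast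
    ring
  have hpow : r ^ (Module.finrank ℝ E - 1) ≠ 0 := by positivity
  simp only [smul_eq_mul, hsplit, mul_inv, ← mul_assoc, mul_inv_cancel₀ hpow, one_mul]

section FractionalOperators

variable {n : ℕ}

theorem marchaudRightC_eq_integral_fwdDiff (α : ℝ) (φ : EuclideanSpace ℝ (Fin n) × ℝ → ℂ)
    (x : EuclideanSpace ℝ (Fin n)) (t : ℝ) :
    marchaudRightC α φ x t =
      -Calpha α • ∫ h in Ioi (0 : ℝ), (h ^ (1 + α))⁻¹ • Δ_[(0, h)] φ (x, t) := by
  rw [marchaudRightC, neg_smul, ← smul_neg, ← integral_neg, Complex.real_smul,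
    ← (measurePreserving_add_right volume t).setIntegral_preimage_emb
      (measurableEmbedding_addRight t), preimage_add_const_Ioi, sub_self]
  congr 1
  refine setIntegral_congr_fun measurableSet_Ioi fun h _ => ?_
  simp only [fwdDiff, Prod.mk_add_mk, add_zero, add_comm t h, add_sub_cancel_right,
    Complex.real_smul, Complex.ofReal_inv]
  ring

theorem fracLapC_eq_integral_fwdDiff (s : ℝ) (φ : EuclideanSpace ℝ (Fin n) × ℝ → ℂ)
    (x : EuclideanSpace ℝ (Fin n)) (t : ℝ) :
    fracLapC s φ x t = -(Cns n s / 2) • ∫ y : EuclideanSpace ℝ (Fin n),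
      (‖y‖ ^ (n + 2 * s))⁻¹ • (Δ_[(y, 0)])^[2] φ (x - y, t) := by
  rw [fracLapC, neg_smul, ← smul_neg, ← integral_neg, Complex.real_smul]
  congr 1
  refine integral_congr_ae (.of_forall fun y => ?_)
  simp only [Function.iterate_succ_apply, Function.iterate_zero_apply, fwdDiff, Prod.mk_add_mk,
    add_zero, sub_add_cancel, Complex.real_smul, Complex.ofReal_inv]
  ring

theorem contDiff_marchaudRightC {N : ℕ∞} {α : ℝ} (hα0 : 0 < α) (hα1 : α < 1)
    {φ : EuclideanSpace ℝ (Fin n) × ℝ → ℂ} (hφ : BoundedContDiff (N + 1) φ) :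
    ContDiff ℝ N fun p : EuclideanSpace ℝ (Fin n) × ℝ => marchaudRightC α φ p.1 p.2 := by
  have hkernel : IntegrableOn (fun h : ℝ => (h ^ (1 + α))⁻¹ *
      min 1 (‖((0 : EuclideanSpace ℝ (Fin n)), h)‖ ^ 1)) (Ioi 0) := by
    refine (integrableOn_Ioi_inv_rpow_mul_min_one_rpow hα0 hα1).congr_fun (fun h hh => ?_)
      measurableSet_Ioi
    simp [Prod.norm_mk, abs_of_pos (mem_Ioi.1 hh), (mem_Ioi.1 hh).le]
  have hsmooth := BoundedContDiff.contDiff_integral_smul_fwdDiff_iter (m := 1) (mod_cast hφ)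
    (Measurable.aestronglyMeasurable (by fun_prop))
    (aestronglyMeasurable_const (b := 0)) (Continuous.aestronglyMeasurable (by fun_prop)) hkernel
  simp only [marchaudRightC_eq_integral_fwdDiff]
  simpa using hsmooth.const_smul (-Calpha α)

theorem contDiff_fracLapC (hn : 1 ≤ n) {N : ℕ∞} {s : ℝ} (hs0 : 0 < s) (hs1 : s < 1)
    {φ : EuclideanSpace ℝ (Fin n) × ℝ → ℂ} (hφ : BoundedContDiff (N + 2) φ) :
    ContDiff ℝ N fun p : EuclideanSpace ℝ (Fin n) × ℝ => fracLapC s φ p.1 p.2 := by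
  have : Nontrivial (EuclideanSpace ℝ (Fin n)) :=
    Module.nontrivial_of_finrank_pos (R := ℝ) (by rwa [finrank_euclideanSpace_fin])
  have hkernel : Integrable fun y : EuclideanSpace ℝ (Fin n) =>
      (‖y‖ ^ (n + 2 * s))⁻¹ * min 1 (‖(y, (0 : ℝ))‖ ^ 2) := by
    have h := integrable_inv_norm_rpow_mul_min_one_rpow (E := EuclideanSpace ℝ (Fin n)) volume
      (a := 2) (b := 2 * s) (by linarith) (by linarith)
    simpa [Prod.norm_mk] using h
  have hsmooth := BoundedContDiff.contDiff_integral_smul_fwdDiff_iter (m := 2) (mod_cast hφ)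
    (Measurable.aestronglyMeasurable (by fun_prop))
    (Continuous.aestronglyMeasurable (f := fun y => (-y, (0 : ℝ))) (by fun_prop))
    (Continuous.aestronglyMeasurable (by fun_prop)) hkernel
  simp only [fracLapC_eq_integral_fwdDiff]
  simpa [sub_eq_add_neg, Prod.add_def] using hsmooth.const_smul (-(Cns n s / 2))

end FractionalOperators

theorem smoothness_of_dual_fractional_operator_general {n : ℕ} (hn : 1 ≤ n) {α s : ℝ}
    (hα0 : 0 < α) (hα1 : α < 1) (hs0 : 0 < s) (hs1 : s < 1) {N : ℕ∞}
    {φ : EuclideanSpace ℝ (Fin n) × ℝ → ℂ} (hφ : BoundedContDiff (N + 2) φ) :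
    ContDiff ℝ N fun p : EuclideanSpace ℝ (Fin n) × ℝ =>
      marchaudRightC α φ p.1 p.2 + fracLapC s φ p.1 p.2 :=
  (contDiff_marchaudRightC hα0 hα1 (hφ.mono (by gcongr; exact one_le_two))).add
    (contDiff_fracLapC hn hs0 hs1 hφ)

/-- for a Schwartz function `φ` on `ℝⁿ × ℝ`, the function
`(x,t) ↦ D_right^α φ(x,t) + (-Δ)^s φ(x,t)` is infinitely differentiable. -/
theorem smoothness_of_dual_fractional_operator
    (n : ℕ) (hn : 1 ≤ n) (α s : ℝ) (hα0 : 0 < α) (hα1 : α < 1)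
    (hs0 : 0 < s) (hs1 : s < 1)
    (φ : SchwartzMap (EuclideanSpace ℝ (Fin n) × ℝ) ℂ) :
    ContDiff ℝ (⊤ : ℕ∞) (fun p : EuclideanSpace ℝ (Fin n) × ℝ =>
      marchaudRightC α (⇑φ) p.1 p.2 + fracLapC s (⇑φ) p.1 p.2) := by
  exact smoothness_of_dual_fractional_operator_general hn hα0 hα1 hs0 hs1
    (BoundedContDiff.of_schwartzMap φ _)
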